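/- arXiv:2109.00502 — 2 statements merged into one kernel-verified Lean document; each statement's English description precedes it below -/
import Mathlib

section
/- The permutation (3, 8, 5, 2, 4, 9, 1, 0, 7, 10, 6) of length 11 is right-crucial. -/
/-- The permutation `σ` of length `n` has a square starting at position `k`
with half-length `ℓ`: the factors `(σ k, …, σ (k+ℓ-1))` and
`(σ (k+ℓ), …, σ (k+2ℓ-1))` are order-isomorphic. -/
def HasSquareAt {n : ℕ} (σ : Fin n → Fin n) (k ℓ : ℕ) : Prop :=
  2 ≤ ℓ ∧ ∃ hb : k + 2 * ℓ ≤ n, ∀ (i j : ℕ) (hi : i < ℓ) (hj : j < ℓ),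
    (σ ⟨k + i, by omega⟩ < σ ⟨k + j, by omega⟩ ↔
      σ ⟨k + ℓ + i, by omega⟩ < σ ⟨k + ℓ + j, by omega⟩)

/-- `σ` contains a square. -/
def ContainsSquare {n : ℕ} (σ : Fin n → Fin n) : Prop :=
  ∃ k ℓ : ℕ, HasSquareAt σ k ℓ

/-- `σ` is square-free: it contains no square. -/
def SquareFree {n : ℕ} (σ : Fin n → Fin n) : Prop :=
  ¬ ContainsSquare σ

/-- `π` (of length `n+1`) is a right-extension of `σ` (of length `n`):
the prefix `(π 0, …, π (n-1))` is order-isomorphic to `σ`. -/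
def IsRightExtension {n : ℕ} (σ : Fin n → Fin n) (π : Fin (n + 1) → Fin (n + 1)) : Prop :=
  ∀ i j : Fin n, π i.castSucc < π j.castSucc ↔ σ i < σ j

/-- `π` (of length `n+1`) is a left-extension of `σ` (of length `n`):
the suffix `(π 1, …, π n)` is order-isomorphic to `σ`. -/
def IsLeftExtension {n : ℕ} (σ : Fin n → Fin n) (π : Fin (n + 1) → Fin (n + 1)) : Prop :=
  ∀ i j : Fin n, π i.succ < π j.succ ↔ σ i < σ j

/-- `σ` is right-crucial: square-free, and every right-extension contains a square. -/
def RightCrucial {n : ℕ} (σ : Equiv.Perm (Fin n)) : Prop :=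
  SquareFree ⇑σ ∧ ∀ π : Equiv.Perm (Fin (n + 1)), IsRightExtension ⇑σ ⇑π → ContainsSquare ⇑π

/-- `σ` is left-crucial: square-free, and every left-extension contains a square. -/
def LeftCrucial {n : ℕ} (σ : Equiv.Perm (Fin n)) : Prop :=
  SquareFree ⇑σ ∧ ∀ π : Equiv.Perm (Fin (n + 1)), IsLeftExtension ⇑σ ⇑π → ContainsSquare ⇑π

/-- `σ` is bicrucial: both left-crucial and right-crucial. -/
def Bicrucial {n : ℕ} (σ : Equiv.Perm (Fin n)) : Prop :=
  LeftCrucial σ ∧ RightCrucial σ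

/-!
A square-free permutation has no square of half-length `2`, so its ascents and descents alternate
in pairs, up-up-down-down. This pattern has least period `4`, which forces every square to have
half-length divisible by `4`; in length `11` only half-length `4` is left to exclude.

A right-extension appends an entry `x` after the final `6`. If `x` lies above the `6`, then
`7, 10 | 6, x` is a square of two ascents; if `x` lies below it, then `4, 9, 1, 0 | 7, 10, 6, x` is
a square, both halves having the pattern `2, 3, 1, 0`.
-/

variable {n k ℓ : ℕ} {σ : Fin n → Fin n}

/-- `σ` has an ascent at position `i`: both `i` and `i + 1` are positions of `σ`, and
`σ i < σ (i + 1)`. Positions are natural numbers so that they can be shifted freely; there is no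
ascent at an `i` out of range. -/
def IsAscent (σ : Fin n → Fin n) (i : ℕ) : Prop :=
  ∃ hi : i + 1 < n, σ ⟨i, by omega⟩ < σ ⟨i + 1, hi⟩

instance (σ : Fin n → Fin n) (i : ℕ) : Decidable (IsAscent σ i) :=
  inferInstanceAs (Decidable (∃ _, _))

theorem HasSquareAt.isAscent_iff (h : HasSquareAt σ k ℓ) {i : ℕ} (hi : i + 1 < ℓ) :
    IsAscent σ (k + i) ↔ IsAscent σ (k + ℓ + i) := by
  obtain ⟨-, hb, h⟩ := h
  have hlt := h i (i + 1) (by omega) hi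
  exact ⟨fun ⟨_, ha⟩ => ⟨by omega, hlt.1 ha⟩, fun ⟨_, ha⟩ => ⟨by omega, hlt.2 ha⟩⟩

theorem hasSquareAt_of_strictMono (hℓ : 2 ≤ ℓ) (hb : k + 2 * ℓ ≤ n) (τ : Equiv.Perm (Fin ℓ))
    (hfst : StrictMono fun i => σ ⟨k + τ i, by omega⟩)
    (hsnd : StrictMono fun i => σ ⟨k + ℓ + τ i, by omega⟩) : HasSquareAt σ k ℓ := by
  refine ⟨hℓ, hb, fun i j hi hj => ?_⟩
  obtain ⟨a, hτa⟩ := τ.surjective ⟨i, hi⟩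
  obtain ⟨b, hτb⟩ := τ.surjective ⟨j, hj⟩
  simpa only [hτa, hτb] using (hfst.lt_iff_lt (a := a) (b := b)).trans hsnd.lt_iff_lt.symm

theorem hasSquareAt_two_iff (hσ : Function.Injective σ) (hk : k + 4 ≤ n) :
    HasSquareAt σ k 2 ↔ (IsAscent σ k ↔ IsAscent σ (k + 2)) := by
  refine ⟨fun h => h.isAscent_iff (i := 0) (by omega), fun h => ⟨le_rfl, hk, fun i j hi hj => ?_⟩⟩
  have hlt : σ ⟨k, by omega⟩ < σ ⟨k + 1, by omega⟩ ↔
      σ ⟨k + 2, by omega⟩ < σ ⟨k + 2 + 1, by omega⟩ :=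
    ⟨fun ha => (h.1 ⟨by omega, ha⟩).2, fun ha => (h.2 ⟨by omega, ha⟩).2⟩
  have hgt : σ ⟨k + 1, by omega⟩ < σ ⟨k, by omega⟩ ↔
      σ ⟨k + 2 + 1, by omega⟩ < σ ⟨k + 2, by omega⟩ := by
    have hnot (i : ℕ) (hi : i + 1 < n) :
        ¬ σ ⟨i, by omega⟩ < σ ⟨i + 1, hi⟩ ↔ σ ⟨i + 1, hi⟩ < σ ⟨i, by omega⟩ :=
      not_lt.trans (hσ.ne (by simp)).le_iff_lt
    exact (hnot k (by omega)).symm.trans (hlt.not.trans (hnot (k + 2) (by omega)))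
  interval_cases i <;> interval_cases j <;> simp [hlt, hgt]

section NoSquareOfHalfLengthTwo

variable (hσ : Function.Injective σ) (h₂ : ∀ i, ¬ HasSquareAt σ i 2)
include hσ h₂

theorem isAscent_add_two_iff_not {i : ℕ} (hi : i + 4 ≤ n) :
    IsAscent σ (i + 2) ↔ ¬ IsAscent σ i := by
  have hne : ¬ (IsAscent σ i ↔ IsAscent σ (i + 2)) := (hasSquareAt_two_iff hσ hi).not.1 (h₂ i)
  tauto

theorem isAscent_add_four_mul_iff {i m : ℕ} (hi : i + 4 * m + 2 ≤ n) :
    IsAscent σ (i + 4 * m) ↔ IsAscent σ i := by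
  induction m with
  | zero => rfl
  | succ m ih =>
    rw [← ih (by omega), show i + 4 * (m + 1) = i + 4 * m + 2 + 2 by ring,
      isAscent_add_two_iff_not hσ h₂ (by omega), isAscent_add_two_iff_not hσ h₂ (by omega), not_not]

theorem HasSquareAt.four_dvd (h : HasSquareAt σ k ℓ) : 4 ∣ ℓ := by
  have hℓ : 2 ≤ ℓ := h.1
  have hb := h.2.1
  have hshift {i : ℕ} (hi : i + 1 < ℓ) : IsAscent σ (k + i) ↔ IsAscent σ (k + i + ℓ % 4) := by
    rw [h.isAscent_iff hi, show k + ℓ + i = k + i + ℓ % 4 + 4 * (ℓ / 4) by omega,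
      isAscent_add_four_mul_iff hσ h₂ (by omega)]
  have hflip : IsAscent σ (k + 2) ↔ ¬ IsAscent σ k := isAscent_add_two_iff_not hσ h₂ (by omega)
  have hstart : IsAscent σ k ↔ IsAscent σ (k + ℓ % 4) := hshift (i := 0) (by omega)
  rw [Nat.dvd_iff_mod_eq_zero]
  obtain hr | hr | hr | hr : ℓ % 4 = 0 ∨ ℓ % 4 = 1 ∨ ℓ % 4 = 2 ∨ ℓ % 4 = 3 := by omega
  · exact hr
  · have hnext : IsAscent σ (k + 1) ↔ IsAscent σ (k + 2) := by
      simpa only [hr] using hshift (i := 1) (by omega)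
    rw [hr] at hstart
    tauto
  · rw [hr] at hstart
    tauto
  · have hnext : IsAscent σ (k + 1) ↔ IsAscent σ (k + 4) := by
      simpa only [hr] using hshift (i := 1) (by omega)
    have hflip₁ : IsAscent σ (k + 3) ↔ ¬ IsAscent σ (k + 1) :=
      isAscent_add_two_iff_not hσ h₂ (by omega)
    have hflip₂ : IsAscent σ (k + 4) ↔ ¬ IsAscent σ (k + 2) :=
      isAscent_add_two_iff_not hσ h₂ (by omega)
    rw [hr] at hstart
    tauto

end NoSquareOfHalfLengthTwo

theorem IsRightExtension.isAscent_iff {π : Fin (n + 1) → Fin (n + 1)}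
    (h : IsRightExtension σ π) {i : ℕ} (hi : i + 1 < n) : IsAscent π i ↔ IsAscent σ i :=
  ⟨fun ⟨_, ha⟩ => ⟨hi, (h ⟨i, by omega⟩ ⟨i + 1, hi⟩).1 ha⟩,
    fun ⟨_, ha⟩ => ⟨by omega, (h ⟨i, by omega⟩ ⟨i + 1, hi⟩).2 ha⟩⟩

/-- The permutation `(3, 8, 5, 2, 4, 9, 1, 0, 7, 10, 6)` as a map given by its list of values. -/
def crucialWord : Fin 11 → Fin 11 :=
  ![3, 8, 5, 2, 4, 9, 1, 0, 7, 10, 6]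

theorem crucialWord_injective : Function.Injective crucialWord := by
  decide

theorem not_hasSquareAt_two_crucialWord (k : ℕ) : ¬ HasSquareAt crucialWord k 2 := by
  intro h
  have halt : ∀ k < 8, ¬ (IsAscent crucialWord k ↔ IsAscent crucialWord (k + 2)) := by decide
  have hk : k + 4 ≤ 11 := h.2.1
  exact halt k (by omega) ((hasSquareAt_two_iff crucialWord_injective hk).1 h)

theorem not_hasSquareAt_four_crucialWord (k : ℕ) : ¬ HasSquareAt crucialWord k 4 := by
  rintro ⟨-, hb, h⟩
  have h₀ : ¬ (crucialWord 0 < crucialWord 2 ↔ crucialWord 4 < crucialWord 6) := by decide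
  have h₁₂ : ¬ (crucialWord 2 < crucialWord 4 ↔ crucialWord 6 < crucialWord 8) := by decide
  have h₃ : ¬ (crucialWord 3 < crucialWord 6 ↔ crucialWord 7 < crucialWord 10) := by decide
  obtain rfl | rfl | rfl | rfl : k = 0 ∨ k = 1 ∨ k = 2 ∨ k = 3 := by omega
  · exact h₀ (h 0 2 (by omega) (by omega))
  · exact h₁₂ (h 1 3 (by omega) (by omega))
  · exact h₁₂ (h 0 2 (by omega) (by omega))
  · exact h₃ (h 0 3 (by omega) (by omega))

theorem squareFree_crucialWord : SquareFree crucialWord := by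
  rintro ⟨k, ℓ, h⟩
  have hdvd : 4 ∣ ℓ := h.four_dvd crucialWord_injective not_hasSquareAt_two_crucialWord
  have hℓ : 2 ≤ ℓ := h.1
  have hb := h.2.1
  obtain rfl : ℓ = 4 := by omega
  exact not_hasSquareAt_four_crucialWord k h

theorem hasSquareAt_four_of_isRightExtension_crucialWord {π : Fin 12 → Fin 12}
    (h : IsRightExtension crucialWord π) (hlast : π 11 < π 10) : HasSquareAt π 4 4 := by
  -- The cycle is the permutation `3, 2, 0, 1`, which sorts the pattern `2, 3, 1, 0`.
  refine hasSquareAt_of_strictMono (by omega) (by omega) c[0, 3, 1, 2] ?_ ?_ <;>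
    refine Fin.strictMono_iff_lt_succ.2 fun i => ?_ <;> fin_cases i
  · exact (h 7 6).2 (by decide)
  · exact (h 6 4).2 (by decide)
  · exact (h 4 5).2 (by decide)
  · exact hlast
  · exact (h 10 8).2 (by decide)
  · exact (h 8 9).2 (by decide)

theorem containsSquare_of_isRightExtension_crucialWord {π : Fin 12 → Fin 12}
    (h : IsRightExtension crucialWord π) (hπ : Function.Injective π) : ContainsSquare π := by
  have hne : π 10 ≠ π 11 := hπ.ne (by decide)
  obtain hasc | hdesc := hne.lt_or_gt
  · have hfst : IsAscent π 8 := (h.isAscent_iff (by omega)).2 (by decide)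
    have hsnd : IsAscent π 10 := ⟨by omega, hasc⟩
    exact ⟨8, 2, (hasSquareAt_two_iff hπ (by omega)).2 (iff_of_true hfst hsnd)⟩
  · exact ⟨4, 4, hasSquareAt_four_of_isRightExtension_crucialWord h hdesc⟩

/-- The permutation `(3, 8, 5, 2, 4, 9, 1, 0, 7, 10, 6)` of length 11 is right-crucial. -/
theorem rightCrucial_example_11 (σ : Equiv.Perm (Fin 11))
    (hσ : ∀ i : Fin 11, (σ i : ℕ) = [3, 8, 5, 2, 4, 9, 1, 0, 7, 10, 6].getD (i : ℕ) 0) :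
    RightCrucial σ := by
  have hword : ⇑σ = crucialWord := by
    ext i
    fin_cases i <;> exact hσ _
  refine ⟨hword ▸ squareFree_crucialWord, fun π hπ => ?_⟩
  rw [hword] at hπ
  exact containsSquare_of_isRightExtension_crucialWord hπ π.injective
end

section
/- The permutation (27, 33, 35, 22, 21, 26, 32, 31, 28, 30, 34, 19, 12, 20, 29, 25, 11, 18, 24, 9, 7, 10, 17, 16, 13, 15, 23, 4, 2, 5, 14, 8, 1, 3, 6, 0) of length 36 is bicrucial. -/
/-! An extension is determined by its new value `t`: the remaining values are those of `σ`, shifted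
to avoid `t`. A permutation of length 36 thus has only 37 extensions on each side, and here each of
them gains a square whose half-length is a power of two. On the right the only value needing more
than half-length 2 is `t = 0`; on the left, half-lengths 2, 4, 8 and 16 take over from one another
as `t` grows. -/

section Extensions

variable {n : ℕ}

/-- The right-extension of `σ` with value `t` at the new last position; the values `≥ t` of `σ` are
shifted up by one. -/
def rightExtension (σ : Fin n → Fin n) (t : Fin (n + 1)) : Fin (n + 1) → Fin (n + 1) :=
  Fin.snoc (t.succAbove ∘ σ) t

/-- The left-extension of `σ` with value `t` at the new first position; the values `≥ t` of `σ` are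
shifted up by one. -/
def leftExtension (σ : Fin n → Fin n) (t : Fin (n + 1)) : Fin (n + 1) → Fin (n + 1) :=
  Fin.cons t (t.succAbove ∘ σ)

theorem eq_succAbove_comp_of_lt_iff_lt {ι : Type*} {σ : ι ≃ Fin n} {f : ι → Fin (n + 1)}
    {t : Fin (n + 1)} (hf : ∀ i j, f i < f j ↔ σ i < σ j) (ht : ∀ i, f i ≠ t) :
    f = t.succAbove ∘ σ := by
  have hmono : StrictMono (f ∘ σ.symm) := fun i j hij => by simpa [hf] using hij
  have hcard : ({t}ᶜ : Finset (Fin (n + 1))).card = n := by simp [Finset.card_compl]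
  have hsorted : f ∘ σ.symm = ({t}ᶜ : Finset (Fin (n + 1))).orderEmbOfFin hcard :=
    Finset.orderEmbOfFin_unique hcard (by simp [ht]) hmono
  rw [Finset.orderEmbOfFin_compl_singleton_eq_succAboveOrderEmb] at hsorted
  exact (σ.comp_symm_eq _ _).mp hsorted

theorem IsRightExtension.eq_rightExtension {σ : Equiv.Perm (Fin n)}
    {π : Equiv.Perm (Fin (n + 1))} (h : IsRightExtension σ π) :
    ⇑π = rightExtension σ (π (Fin.last n)) := by
  have hinit : Fin.init π = (π (Fin.last n)).succAbove ∘ σ :=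
    eq_succAbove_comp_of_lt_iff_lt h fun i => π.injective.ne (Fin.castSucc_ne_last i)
  rw [rightExtension, ← hinit, Fin.snoc_init_self]

theorem IsLeftExtension.eq_leftExtension {σ : Equiv.Perm (Fin n)}
    {π : Equiv.Perm (Fin (n + 1))} (h : IsLeftExtension σ π) :
    ⇑π = leftExtension σ (π 0) := by
  have htail : Fin.tail π = (π 0).succAbove ∘ σ :=
    eq_succAbove_comp_of_lt_iff_lt h fun i => π.injective.ne (Fin.succ_ne_zero i)
  rw [leftExtension, ← htail, Fin.cons_self_tail]

end Extensions

section Decidability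

variable {n : ℕ} (σ : Fin n → Fin n)

theorem hasSquareAt_iff_forall_fin (k ℓ : ℕ) :
    HasSquareAt σ k ℓ ↔ 2 ≤ ℓ ∧ ∃ _ : k + 2 * ℓ ≤ n, ∀ i j : Fin ℓ,
      (σ ⟨k + i, by lia⟩ < σ ⟨k + j, by lia⟩ ↔
        σ ⟨k + ℓ + i, by lia⟩ < σ ⟨k + ℓ + j, by lia⟩) :=
  and_congr_right fun _ => exists_congr fun _ =>
    ⟨fun h i j => h i j i.isLt j.isLt, fun h i j hi hj => h ⟨i, hi⟩ ⟨j, hj⟩⟩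

theorem containsSquare_iff_exists_fin : ContainsSquare σ ↔ ∃ k ℓ : Fin n, HasSquareAt σ k ℓ := by
  constructor
  · rintro ⟨k, ℓ, hℓ, hn, h⟩
    exact ⟨⟨k, by lia⟩, ⟨ℓ, by lia⟩, hℓ, hn, h⟩
  · rintro ⟨k, ℓ, h⟩
    exact ⟨k, ℓ, h⟩

instance (k ℓ : ℕ) : Decidable (HasSquareAt σ k ℓ) :=
  decidable_of_iff' _ (hasSquareAt_iff_forall_fin σ k ℓ)

instance : Decidable (ContainsSquare σ) :=
  decidable_of_iff' _ (containsSquare_iff_exists_fin σ)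

instance : Decidable (SquareFree σ) :=
  inferInstanceAs (Decidable (¬ ContainsSquare σ))

end Decidability

/-- The displayed sequence of length 36, as a self-map of `Fin 36`. -/
def example36 : Fin 36 → Fin 36 :=
  ![27, 33, 35, 22, 21, 26, 32, 31, 28, 30, 34, 19, 12, 20, 29, 25, 11, 18,
    24, 9, 7, 10, 17, 16, 13, 15, 23, 4, 2, 5, 14, 8, 1, 3, 6, 0]

theorem squareFree_example36 : SquareFree example36 := by
  decide +kernel

theorem hasSquareAt_rightExtension_example36 (t : Fin 37) :
    HasSquareAt (rightExtension example36 t) (if t = 0 then 5 else 33)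
      (if t = 0 then 16 else 2) := by
  decide +revert +kernel

theorem hasSquareAt_leftExtension_example36 (t : Fin 37) :
    HasSquareAt (leftExtension example36 t) 0
      (if t ≤ 27 then 2 else if t ≤ 33 then 4 else if t ≤ 35 then 8 else 16) := by
  decide +revert +kernel

/-- The displayed permutation of length 36 is bicrucial. -/
theorem bicrucial_example_36 (σ : Equiv.Perm (Fin 36))
    (hσ : ∀ i : Fin 36,
      (σ i : ℕ) = [27, 33, 35, 22, 21, 26, 32, 31, 28, 30, 34, 19, 12, 20, 29, 25, 11, 18,
        24, 9, 7, 10, 17, 16, 13, 15, 23, 4, 2, 5, 14, 8, 1, 3, 6, 0].getD (i : ℕ) 0) :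
    Bicrucial σ := by
  have hσ' : ⇑σ = example36 := by
    funext i
    rw [Fin.ext_iff, hσ]
    decide +revert
  have hfree : SquareFree σ := hσ' ▸ squareFree_example36
  refine ⟨⟨hfree, fun π hπ => ?_⟩, ⟨hfree, fun π hπ => ?_⟩⟩
  · rw [hπ.eq_leftExtension, hσ']
    exact ⟨_, _, hasSquareAt_leftExtension_example36 _⟩
  · rw [hπ.eq_rightExtension, hσ']
    exact ⟨_, _, hasSquareAt_rightExtension_example36 _⟩
end
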